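/- Assume the string equation hypothesis holds for F_0, …, F_g. Then for all integers s ≥ 0, m ≥ 1, every primary coordinate entry W = τ_0(γ_x), and all coordinate entries V_1, …, V_s, one has Ψ_{2,s,g,m}(W S | V_1 ⋯ V_s) = −Ψ_{1,s,g,m−1}(W | V_1 ⋯ V_s), where the entry S is expanded by R-multilinearity of Ψ. -/

import Mathlib

open scoped BigOperators

namespace GWBigPhase

/-- The big phase space coefficient ring: formal power series over `ℚ` in the
variables `t_n^α`, indexed by pairs `(n, α) : ℕ × Fin N`. -/
abbrev R (N : ℕ) : Type := MvPowerSeries (ℕ × Fin N) ℚ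

/-- Partial derivative of a multivariate power series with respect to the
variable indexed by `i`. -/
noncomputable def pderiv (N : ℕ) (i : ℕ × Fin N) (f : R N) : R N :=
  fun e => ((e i : ℚ) + 1) * MvPowerSeries.coeff (R := ℚ) (e + Finsupp.single i 1) f

/-- Coefficientwise (formally convergent) sum of a family of power series. -/
noncomputable def seriesSum (N : ℕ) (f : ℕ × Fin N → R N) : R N :=
  fun e => ∑ᶠ p : ℕ × Fin N, MvPowerSeries.coeff (R := ℚ) e (f p)

/-- The bracket `⟨⟨τ_{n_1}(γ_{α_1}) ⋯ τ_{n_k}(γ_{α_k})⟩⟩_h`: iterated partial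
derivative of `F h`, and `0` whenever some descendent level is negative. -/
noncomputable def Bracket (N : ℕ) (F : ℕ → R N) (h : ℕ) : List (ℤ × Fin N) → R N
  | [] => F h
  | (n, α) :: L => if 0 ≤ n then pderiv N (n.toNat, α) (Bracket N F h L) else 0

/-- `t̃_n^α = t_n^α − δ_{α,1} δ_{n,1}` (the distinguished index `1` is `0 : Fin N`). -/
noncomputable def ttilde (N : ℕ) [NeZero N] (n : ℕ) (α : Fin N) : R N :=
  MvPowerSeries.X (n, α) - if n = 1 ∧ α = 0 then 1 else 0

/-- Interpret a list of coordinate entries `τ_n(γ_α)` with `n : ℕ` as entries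
with integer descendent levels. -/
def coordList (N : ℕ) (L : List (ℕ × Fin N)) : List (ℤ × Fin N) :=
  L.map (fun p => ((p.1 : ℤ), p.2))

/-- Lower the descendent level of the `i`-th entry of a list by one (the
operator `τ_-` applied in the `i`-th slot). -/
def lowerAt (N : ℕ) (L : List (ℤ × Fin N)) (i : ℕ) : List (ℤ × Fin N) :=
  L.mapIdx (fun j p => if j = i then (p.1 - 1, p.2) else p)

/-- The quantity `Ψ_{r,s,g,m}(W_1 ⋯ W_r | V_1 ⋯ V_s)`, where `r = Ws.length`
and `s = Vs.length`. -/
noncomputable def Psi (N : ℕ) [NeZero N] (ηinv : Matrix (Fin N) (Fin N) ℚ)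
    (F : ℕ → R N) (g m : ℕ) (Ws Vs : List (ℤ × Fin N)) : R N :=
  (∑ k ∈ Finset.range (m + 1), ∑ g1 ∈ Finset.range (g + 1),
      ∑ α : Fin N, ∑ β : Fin N,
        (-1 : R N) ^ k * MvPowerSeries.C (σ := ℕ × Fin N) (R := ℚ) (ηinv α β) *
          Bracket N F g1 (((k : ℤ), α) :: Ws) *
          Bracket N F (g - g1) ((((m - k : ℕ) : ℤ), β) :: Vs))
  - (match Ws with
     | [] => seriesSum N (fun p =>
         ttilde N p.1 p.2 * Bracket N F g (((p.1 : ℤ) + (m : ℤ) + 1, p.2) :: Vs))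
     | [w] => Bracket N F g ((w.1 + (m : ℤ) + 1, w.2) :: Vs)
     | _ => 0)
  + (-1 : R N) ^ (m + 1) *
    (match Vs with
     | [] => seriesSum N (fun p =>
         ttilde N p.1 p.2 * Bracket N F g (((p.1 : ℤ) + (m : ℤ) + 1, p.2) :: Ws))
     | [v] => Bracket N F g (Ws ++ [(v.1 + (m : ℤ) + 1, v.2)])
     | _ => 0)

/-- `Ψ_{r+1,s,g,m}(W_1 ⋯ W_r S | V_1 ⋯ V_s)`: the value of `Ψ` with the string
vector field `S = −Σ_{n,α} t̃_n^α τ_{n−1}(γ_α)` inserted as the last `W`-entry,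
expanded by `R`-multilinearity of `Ψ`. -/
noncomputable def PsiS (N : ℕ) [NeZero N] (ηinv : Matrix (Fin N) (Fin N) ℚ)
    (F : ℕ → R N) (g m : ℕ) (Ws Vs : List (ℤ × Fin N)) : R N :=
  - seriesSum N (fun p =>
      ttilde N p.1 p.2 * Psi N ηinv F g m (Ws ++ [((p.1 : ℤ) - 1, p.2)]) Vs)

/-- The string equation hypothesis for `F_0, …, F_g`. -/
def StringEqHyp (N : ℕ) [NeZero N] (η : Matrix (Fin N) (Fin N) ℚ)
    (F : ℕ → R N) (g : ℕ) : Prop :=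
  ∀ h : ℕ, h ≤ g →
    pderiv N ((0 : ℕ), (0 : Fin N)) (F h) =
      seriesSum N (fun p => MvPowerSeries.X (p.1 + 1, p.2) * pderiv N p (F h)) +
      (if h = 0 then
        MvPowerSeries.C (σ := ℕ × Fin N) (R := ℚ) (1 / 2) *
          ∑ α : Fin N, ∑ β : Fin N,
            MvPowerSeries.C (σ := ℕ × Fin N) (R := ℚ) (η α β) *
              MvPowerSeries.X ((0 : ℕ), α) * MvPowerSeries.X ((0 : ℕ), β)
       else 0)


open MvPowerSeries

variable {N : ℕ}

section Derivative

theorem pderiv_eq (i : ℕ × Fin N) (f : R N) : pderiv N i f = MvPowerSeries.pderiv ℚ i f := by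
  ext e
  rw [MvPowerSeries.coeff_pderiv, mul_comm]
  rfl

theorem coeff_pderiv (i : ℕ × Fin N) (f : R N) (e : ℕ × Fin N →₀ ℕ) :
    coeff e (pderiv N i f) = ((e i : ℚ) + 1) * coeff (e + Finsupp.single i 1) f := rfl

theorem pderiv_comm (i j : ℕ × Fin N) (f : R N) :
    pderiv N i (pderiv N j f) = pderiv N j (pderiv N i f) := by
  ext e
  simp only [coeff_pderiv]
  rw [add_right_comm e]
  by_cases h : i = j
  · subst h; rfl
  · simp [h, Ne.symm h]
    ring

theorem pderiv_X (i j : ℕ × Fin N) :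
    MvPowerSeries.pderiv ℚ i (X j : R N) = if i = j then 1 else 0 := by
  split_ifs with h
  · rw [h, pderiv_X_self]
  · exact pderiv_X_of_ne (Ne.symm h)

theorem Bracket_swap (F : ℕ → R N) (h : ℕ) (a b : ℤ × Fin N) (L : List (ℤ × Fin N)) :
    Bracket N F h (a :: b :: L) = Bracket N F h (b :: a :: L) := by
  simp only [Bracket]
  split_ifs
  · exact pderiv_comm _ _ _
  all_goals simp [pderiv_eq]

theorem coeff_X_mul_of_eq_zero (j : ℕ × Fin N) (f : R N) {e : ℕ × Fin N →₀ ℕ} (h : e j = 0) :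
    coeff e (X j * f) = 0 := by
  classical
  rw [X, coeff_monomial_mul, if_neg]
  simp [h]

end Derivative

section DilatonShiftedSum

variable [NeZero N]

theorem pderiv_ttilde_mul (i p : ℕ × Fin N) (f : R N) :
    pderiv N i (ttilde N p.1 p.2 * f) =
      ttilde N p.1 p.2 * pderiv N i f + if i = p then f else 0 := by
  have h : MvPowerSeries.pderiv ℚ i (ttilde N p.1 p.2) = if i = p then 1 else 0 := by
    rw [ttilde, map_sub, pderiv_X]
    split_ifs <;> simp
  rw [pderiv_eq, pderiv_eq, Derivation.leibniz, h]
  split_ifs <;> simp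

/-- The formal sum `Σ_{n,α} t̃_n^α G_{n,α}`. -/
noncomputable def ttildeSum (G : ℕ × Fin N → R N) : R N :=
  seriesSum N fun p => ttilde N p.1 p.2 * G p

theorem coeff_ttilde_mul_of_notMem {p : ℕ × Fin N} {e : ℕ × Fin N →₀ ℕ}
    {T : Finset (ℕ × Fin N)} (hT : e.support ⊆ T) (h1 : (1, 0) ∈ T) (hp : p ∉ T) (f : R N) :
    coeff e (ttilde N p.1 p.2 * f) = 0 := by
  have hp1 : ¬(p.1 = 1 ∧ p.2 = 0) := fun h => hp (by rwa [Prod.ext (y := (1, 0)) h.1 h.2])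
  have he : e p = 0 := Finsupp.notMem_support_iff.1 fun h => hp (hT h)
  rw [ttilde, if_neg hp1, sub_zero, coeff_X_mul_of_eq_zero _ _ he]

theorem coeff_ttildeSum (G : ℕ × Fin N → R N) {e : ℕ × Fin N →₀ ℕ}
    {T : Finset (ℕ × Fin N)} (hT : e.support ⊆ T) (h1 : (1, 0) ∈ T) :
    coeff e (ttildeSum G) = ∑ p ∈ T, coeff e (ttilde N p.1 p.2 * G p) := by
  change (∑ᶠ p : ℕ × Fin N, coeff e (ttilde N p.1 p.2 * G p)) = _
  refine finsum_eq_sum_of_support_subset _ fun p hp => ?_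
  by_contra h
  exact hp (coeff_ttilde_mul_of_notMem hT h1 h _)

theorem ttildeSum_add (G H : ℕ × Fin N → R N) :
    ttildeSum (fun p => G p + H p) = ttildeSum G + ttildeSum H := by
  ext e
  have hT := Finset.subset_insert (1, 0) e.support
  have h1 := Finset.mem_insert_self (1, 0) e.support
  simp only [map_add, coeff_ttildeSum _ hT h1, mul_add, Finset.sum_add_distrib]

theorem ttildeSum_zero : ttildeSum (fun _ : ℕ × Fin N => (0 : R N)) = 0 := by
  ext e
  rw [coeff_ttildeSum _ (Finset.subset_insert (1, 0) e.support) (Finset.mem_insert_self _ _)]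
  simp

theorem ttildeSum_sum {ι : Type*} (s : Finset ι) (G : ι → ℕ × Fin N → R N) :
    ttildeSum (fun p => ∑ a ∈ s, G a p) = ∑ a ∈ s, ttildeSum (G a) := by
  classical
  induction s using Finset.induction_on with
  | empty => simp [ttildeSum_zero]
  | insert a s ha ih => simp only [Finset.sum_insert ha, ttildeSum_add, ih]

theorem ttildeSum_mul_left (c : R N) (G : ℕ × Fin N → R N) :
    ttildeSum (fun p => c * G p) = c * ttildeSum G := by
  classical
  ext e
  have h1 := Finset.mem_insert_self (1, 0) e.support
  rw [coeff_ttildeSum _ (Finset.subset_insert (1, 0) e.support) h1, coeff_mul]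
  have key : ∀ x ∈ Finset.HasAntidiagonal.antidiagonal e, coeff x.1 c * coeff x.2 (ttildeSum G) =
      ∑ p ∈ insert (1, 0) e.support, coeff x.1 c * coeff x.2 (ttilde N p.1 p.2 * G p) := by
    intro x hx
    have hle : x.2 ≤ e := Finset.HasAntidiagonal.mem_antidiagonal.1 hx ▸ le_add_self
    rw [coeff_ttildeSum _
      ((Finsupp.support_mono hle).trans (Finset.subset_insert (1, 0) e.support)) h1,
      Finset.mul_sum]
  rw [Finset.sum_congr rfl key, Finset.sum_comm]
  refine Finset.sum_congr rfl fun p _ => ?_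
  rw [mul_left_comm, coeff_mul]

theorem ttildeSum_mul_right (c : R N) (G : ℕ × Fin N → R N) :
    ttildeSum (fun p => G p * c) = ttildeSum G * c := by
  simpa only [mul_comm] using ttildeSum_mul_left c G

theorem ttildeSum_comm (G : ℕ × Fin N → ℕ × Fin N → R N) :
    ttildeSum (fun p => ttildeSum (G p)) = ttildeSum (fun q => ttildeSum fun p => G p q) := by
  ext e
  have hT := Finset.subset_insert (1, 0) e.support
  have h1 := Finset.mem_insert_self (1, 0) e.support
  have key : ∀ H : ℕ × Fin N → ℕ × Fin N → R N, coeff e (ttildeSum fun p => ttildeSum (H p)) =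
      ∑ p ∈ insert (1, 0) e.support, ∑ q ∈ insert (1, 0) e.support,
        coeff e (ttilde N q.1 q.2 * (ttilde N p.1 p.2 * H p q)) := by
    intro H
    rw [coeff_ttildeSum _ hT h1]
    refine Finset.sum_congr rfl fun p _ => ?_
    rw [← ttildeSum_mul_left, coeff_ttildeSum _ hT h1]
  refine (key G).trans (Eq.trans ?_ (key fun q p => G p q).symm)
  rw [Finset.sum_comm]
  refine Finset.sum_congr rfl fun p _ => Finset.sum_congr rfl fun q _ => ?_
  rw [mul_left_comm]

theorem pderiv_ttildeSum (i : ℕ × Fin N) (G : ℕ × Fin N → R N) :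
    pderiv N i (ttildeSum G) = ttildeSum (fun p => pderiv N i (G p)) + G i := by
  classical
  ext e
  set T := insert (1, 0) (e + Finsupp.single i 1).support with hTdef
  have hT := Finset.subset_insert (1, 0) (e + Finsupp.single i 1).support
  have h1 : (1, 0) ∈ T := Finset.mem_insert_self _ _
  have hi : i ∈ T := hT (by simp)
  have hT' : e.support ⊆ T := (Finsupp.support_mono le_self_add).trans hT
  rw [coeff_pderiv, map_add, coeff_ttildeSum _ hT h1, coeff_ttildeSum _ hT' h1, Finset.mul_sum,
    ← hTdef]
  simp only [← coeff_pderiv, pderiv_ttilde_mul, map_add, Finset.sum_add_distrib]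
  congr 1
  rw [Finset.sum_eq_single_of_mem i hi fun p _ hp => by rw [if_neg hp.symm, map_zero], if_pos rfl]

end DilatonShiftedSum

section StringEquation

variable {η : Matrix (Fin N) (Fin N) ℚ} {F : ℕ → R N} {g h : ℕ}

/-- The quadratic term `½ δ_{h,0} Σ η_{αβ} t_0^α t_0^β` of the string equation. -/
noncomputable def stringQuadratic (η : Matrix (Fin N) (Fin N) ℚ) (h : ℕ) : R N :=
  if h = 0 then
    C (1 / 2) * ∑ α : Fin N, ∑ β : Fin N, C (η α β) * X ((0 : ℕ), α) * X ((0 : ℕ), β)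
  else 0

theorem pderiv_pderiv_stringQuadratic (hη : ∀ α β, η α β = η β α) (i : ℕ × Fin N) (x : Fin N) :
    pderiv N i (pderiv N (0, x) (stringQuadratic η h)) =
      if h = 0 ∧ i.1 = 0 then C (η i.2 x) else 0 := by
  obtain ⟨n, a⟩ := i
  by_cases hh : h = 0
  · have hx : pderiv N (0, x) (stringQuadratic η h) = ∑ β, η x β • X ((0 : ℕ), β) := by
      have hX (β : Fin N) : MvPowerSeries.pderiv ℚ (0, x) (X ((0 : ℕ), β) : R N) =
          if x = β then 1 else 0 := by
        rw [pderiv_X]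
        simp
      simp only [stringQuadratic, hh, if_true, pderiv_eq, ← smul_eq_C_mul, smul_mul_assoc,
        Derivation.map_smul, map_sum, Derivation.leibniz, hX, smul_eq_mul, mul_ite, mul_one,
        mul_zero, smul_add, smul_ite, smul_zero, Finset.sum_add_distrib, Finset.sum_ite_eq,
        Finset.mem_univ]
      rw [Finset.sum_comm (f := fun α β => if x = α then _ else _)]
      simp only [Finset.sum_ite_eq, Finset.mem_univ, if_true, hη _ x, ← add_smul]
      rw [add_halves, one_smul]
    rw [hx]
    simp only [pderiv_eq, map_sum, Derivation.map_smul, pderiv_X, Prod.mk.injEq, hh, true_and]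
    by_cases hn : n = 0
    · simp [hn, smul_eq_C_mul, hη x a]
    · simp [hn]
  · simp [stringQuadratic, hh, pderiv_eq]

variable [NeZero N]

theorem ttildeSum_lowered (f : R N) :
    ttildeSum (fun p => if 1 ≤ p.1 then pderiv N (p.1 - 1, p.2) f else 0) =
      seriesSum N (fun p => X (p.1 + 1, p.2) * pderiv N p f) - pderiv N (0, 0) f := by
  set L : ℕ × Fin N → R N := fun p => if 1 ≤ p.1 then pderiv N (p.1 - 1, p.2) f else 0 with hL
  let u : ℕ × Fin N → ℕ × Fin N := fun p => (p.1 + 1, p.2)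
  have hu : Function.Injective u := fun p q h => by
    simpa [u, Prod.ext_iff] using h
  ext e
  have hfin : (Function.support fun p => coeff e (X p * L p)) ⊆ e.support := fun p hp => by
    by_contra h
    exact hp (coeff_X_mul_of_eq_zero _ _ (Finsupp.notMem_support_iff.1 h))
  have hX : ∑ᶠ p, coeff e (X p * L p) = ∑ᶠ p, coeff e (X (u p) * pderiv N p f) := by
    rw [← finsum_mem_univ, ← finsum_mem_inter_support_eq' (s := Set.range u), finsum_mem_range hu]
    · simp [hL, u]
    · rintro ⟨_ | n, α⟩ hp
      · simp [hL] at hp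
      · simp [u]
  have hsingle : ∑ᶠ p : ℕ × Fin N, coeff e ((if p.1 = 1 ∧ p.2 = 0 then 1 else 0) * L p) =
      coeff e (pderiv N (0, 0) f) := by
    rw [finsum_eq_single _ (1, 0)]
    · simp [hL]
    · intro p hp
      rw [if_neg fun h => hp (Prod.ext h.1 h.2), zero_mul, map_zero]
  rw [map_sub, ← hsingle]
  change ∑ᶠ p : ℕ × Fin N, coeff e (ttilde N p.1 p.2 * L p) =
    (∑ᶠ p, coeff e (X (u p) * pderiv N p f)) - _
  rw [← hX, ← finsum_sub_distrib (e.support.finite_toSet.subset hfin)]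
  · simp only [ttilde, sub_mul, map_sub]
  · refine (Set.finite_singleton (1, 0)).subset fun p hp => ?_
    by_contra h
    refine hp ?_
    beta_reduce
    rw [if_neg fun h' => h (Prod.ext h'.1 h'.2), zero_mul, map_zero]

theorem StringEqHyp.ttildeSum_bracket (hs : StringEqHyp N η F g) (hh : h ≤ g) :
    ttildeSum (fun p => Bracket N F h [((p.1 : ℤ) - 1, p.2)]) = -stringQuadratic η h := by
  have hB : (fun p : ℕ × Fin N => Bracket N F h [((p.1 : ℤ) - 1, p.2)]) =
      fun p => if 1 ≤ p.1 then pderiv N (p.1 - 1, p.2) (F h) else 0 := by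
    funext p
    have h1 : (0 ≤ (p.1 : ℤ) - 1) ↔ 1 ≤ p.1 := by omega
    have h2 : ((p.1 : ℤ) - 1).toNat = p.1 - 1 := by omega
    simp only [Bracket, h1, h2]
  rw [hB, ttildeSum_lowered, hs h hh, stringQuadratic]
  ring

/-- Insertion of the string vector field next to a primary entry and one further entry. -/
theorem StringEqHyp.ttildeSum_bracket_cons_primary (hs : StringEqHyp N η F g) (hh : h ≤ g)
    (hη : ∀ α β, η α β = η β α) (n : ℕ) (a x : Fin N) :
    ttildeSum (fun p => Bracket N F h [((n : ℤ), a), (0, x), ((p.1 : ℤ) - 1, p.2)]) =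
      -Bracket N F h [((n : ℤ) - 1, a), (0, x)] - if h = 0 ∧ n = 0 then C (η a x) else 0 := by
  set G : ℕ × Fin N → R N := fun p => Bracket N F h [((p.1 : ℤ) - 1, p.2)] with hG
  have hG0 : G (0, x) = 0 := by simp [hG, Bracket]
  have h1 := pderiv_ttildeSum (n, a) fun p => pderiv N (0, x) (G p)
  have h2 : ttildeSum (fun p => pderiv N (0, x) (G p)) = -pderiv N (0, x) (stringQuadratic η h) := by
    rw [← add_zero (ttildeSum _), ← hG0, ← pderiv_ttildeSum, hs.ttildeSum_bracket hh, pderiv_eq,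
      map_neg, pderiv_eq]
  rw [h2, pderiv_eq, map_neg, ← pderiv_eq, pderiv_pderiv_stringQuadratic hη] at h1
  have h3 : pderiv N (0, x) (G (n, a)) = Bracket N F h [((n : ℤ) - 1, a), (0, x)] := by
    rw [Bracket_swap]
    simp [hG, Bracket]
  rw [h3] at h1
  have h4 : ttildeSum (fun p => Bracket N F h [((n : ℤ), a), (0, x), ((p.1 : ℤ) - 1, p.2)]) =
      ttildeSum fun p => pderiv N (n, a) (pderiv N (0, x) (G p)) := by
    simp [hG, Bracket]
  rw [h4]
  linear_combination -h1

end StringEquation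

section PsiString

variable {η ηinv : Matrix (Fin N) (Fin N) ℚ} {F : ℕ → R N} {g : ℕ}

theorem sum_inverse_metric (hη : ∀ α β, η α β = η β α) (hinv : η * ηinv = 1) (x : Fin N)
    (B : ℕ → Fin N → R N) :
    ∑ g1 ∈ Finset.range (g + 1), ∑ α : Fin N, ∑ β : Fin N,
      C (ηinv α β) * (if g1 = 0 then C (η α x) else 0) * B (g - g1) β = B g x := by
  rw [Finset.sum_eq_single_of_mem 0 (by simp) fun g1 _ h => by simp [h], Finset.sum_comm]
  simp only [if_true, tsub_zero, ← Finset.sum_mul, ← map_mul, ← map_sum]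
  have h (β : Fin N) : ∑ α, ηinv α β * η α x = if x = β then 1 else 0 := by
    rw [← Matrix.one_apply, ← hinv, Matrix.mul_apply]
    exact Finset.sum_congr rfl fun α _ => by rw [hη α x, mul_comm]
  simp [h]

variable [NeZero N]

/-- The part of `Psi` involving the `V`-entries through `δ_{s,0}` and `δ_{s,1}`. -/
noncomputable def psiTail (F : ℕ → R N) (g m : ℕ) (Ws : List (ℤ × Fin N)) :
    List (ℤ × Fin N) → R N
  | [] => ttildeSum fun p => Bracket N F g (((p.1 : ℤ) + (m : ℤ) + 1, p.2) :: Ws)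
  | [v] => Bracket N F g (Ws ++ [(v.1 + (m : ℤ) + 1, v.2)])
  | _ => 0

theorem ttildeSum_psiTail (hs : StringEqHyp N η F g) (hη : ∀ α β, η α β = η β α) (m : ℕ)
    (x : Fin N) (Vs : List (ℕ × Fin N)) :
    ttildeSum (fun p => psiTail F g (m + 1) [(0, x), ((p.1 : ℤ) - 1, p.2)] (coordList N Vs)) =
      -psiTail F g m [(0, x)] (coordList N Vs) := by
  have key (n : ℕ) (a : Fin N) :
      ttildeSum (fun p => Bracket N F g
        [((n : ℤ) + ((m + 1 : ℕ) : ℤ) + 1, a), (0, x), ((p.1 : ℤ) - 1, p.2)]) =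
      -Bracket N F g [((n : ℤ) + (m : ℤ) + 1, a), (0, x)] := by
    have h := hs.ttildeSum_bracket_cons_primary le_rfl hη (n + (m + 1) + 1) a x
    simp only [Nat.add_eq_zero_iff, one_ne_zero, and_false, if_false, sub_zero] at h
    push_cast at h ⊢
    rw [h]
    congr 4
    ring
  match Vs with
  | [] =>
    simp only [coordList, List.map_nil, psiTail]
    rw [ttildeSum_comm]
    simp only [key]
    simpa only [neg_one_mul] using ttildeSum_mul_left (-1 : R N)
      fun p => Bracket N F g [((p.1 : ℤ) + (m : ℤ) + 1, p.2), (0, x)]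
  | [v] =>
    have hswap (p : ℤ × Fin N) (q : ℤ × Fin N) :
        Bracket N F g [(0, x), p, q] = Bracket N F g [q, (0, x), p] := by
      rw [Bracket_swap _ _ q, Bracket, Bracket_swap, ← Bracket]
    simp only [coordList, List.map_cons, List.map_nil, psiTail, List.cons_append, List.nil_append,
      hswap, key]
    rw [Bracket_swap]
  | _ :: _ :: _ => simp [coordList, psiTail, ttildeSum_zero]

end PsiString

/-- For `s ≥ 0`, `m ≥ 1`, a primary coordinate entry `W = τ_0(γ_x)` and
coordinate entries `V_1, …, V_s`:
`Ψ_{2,s,g,m}(W S | V) = −Ψ_{1,s,g,m−1}(W | V)`. -/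
theorem psi_two_string_primary (N : ℕ) [NeZero N]
    (η ηinv : Matrix (Fin N) (Fin N) ℚ)
    (hηsymm : ∀ α β, η α β = η β α)
    (hinv : η * ηinv = 1) (hinv' : ηinv * η = 1)
    (g : ℕ) (F : ℕ → R N) (hstring : StringEqHyp N η F g)
    (s m : ℕ) (hm : 1 ≤ m)
    (x : Fin N) (Vs : List (ℕ × Fin N)) (hVs : Vs.length = s) :
    PsiS N ηinv F g m [((0 : ℤ), x)] (coordList N Vs) =
      - Psi N ηinv F g (m - 1) [((0 : ℤ), x)] (coordList N Vs) := by
  obtain ⟨m, rfl⟩ := Nat.exists_eq_add_of_le' hm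
  have hL : PsiS N ηinv F g (m + 1) [((0 : ℤ), x)] (coordList N Vs) =
      -ttildeSum fun p => (∑ k ∈ Finset.range (m + 1 + 1), ∑ g1 ∈ Finset.range (g + 1),
        ∑ α : Fin N, ∑ β : Fin N,
          (-1 : R N) ^ k * C (ηinv α β) *
            Bracket N F g1 [((k : ℤ), α), (0, x), ((p.1 : ℤ) - 1, p.2)] *
            Bracket N F (g - g1) ((((m + 1 - k : ℕ) : ℤ), β) :: coordList N Vs)) +
        (-1 : R N) ^ (m + 1 + 1) *
          psiTail F g (m + 1) [(0, x), ((p.1 : ℤ) - 1, p.2)] (coordList N Vs) := by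
    unfold PsiS ttildeSum
    congr 2
    funext p
    simp only [Psi, List.cons_append, List.nil_append, sub_zero]
    congr 3
  have hR : Psi N ηinv F g (m + 1 - 1) [((0 : ℤ), x)] (coordList N Vs) =
      (∑ k ∈ Finset.range (m + 1), ∑ g1 ∈ Finset.range (g + 1),
        ∑ α : Fin N, ∑ β : Fin N,
          (-1 : R N) ^ k * C (ηinv α β) * Bracket N F g1 [((k : ℤ), α), (0, x)] *
            Bracket N F (g - g1) ((((m - k : ℕ) : ℤ), β) :: coordList N Vs)) -
        Bracket N F g ((((m + 1 : ℕ) : ℤ), x) :: coordList N Vs) +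
        (-1 : R N) ^ (m + 1) * psiTail F g m [(0, x)] (coordList N Vs) := by
    simp only [Psi, Nat.add_sub_cancel, zero_add, Nat.cast_add, Nat.cast_one]
    congr 2
  rw [hL, hR, ttildeSum_add, ttildeSum_mul_left, ttildeSum_psiTail hstring hηsymm]
  simp only [ttildeSum_sum, ttildeSum_mul_left, ttildeSum_mul_right]
  have hB (k : ℕ) : ∀ g1 ∈ Finset.range (g + 1), ∀ α : Fin N, _ := fun g1 hg α =>
    hstring.ttildeSum_bracket_cons_primary
      (Nat.lt_succ_iff.1 (Finset.mem_range.1 hg)) hηsymm k α x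
  rw [Finset.sum_range_succ']
  have hzero : ∑ g1 ∈ Finset.range (g + 1), ∑ α : Fin N, ∑ β : Fin N,
      (-1 : R N) ^ 0 * C (ηinv α β) *
        ttildeSum (fun p => Bracket N F g1 [(((0 : ℕ) : ℤ), α), (0, x), ((p.1 : ℤ) - 1, p.2)]) *
        Bracket N F (g - g1) ((((m + 1 - 0 : ℕ) : ℤ), β) :: coordList N Vs) =
      -Bracket N F g ((((m + 1 : ℕ) : ℤ), x) :: coordList N Vs) := by
    rw [← sum_inverse_metric hηsymm hinv x fun h β =>
      Bracket N F h ((((m + 1 : ℕ) : ℤ), β) :: coordList N Vs)]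
    simp only [← Finset.sum_neg_distrib]
    refine Finset.sum_congr rfl fun g1 hg => Finset.sum_congr rfl fun α _ =>
      Finset.sum_congr rfl fun β _ => ?_
    rw [hB 0 g1 hg α]
    have h0 : Bracket N F g1 [(((0 : ℕ) : ℤ) - 1, α), (0, x)] = 0 := by simp [Bracket]
    simp only [h0, pow_zero, and_true, tsub_zero]
    ring
  have hsucc : ∀ k ∈ Finset.range (m + 1), ∑ g1 ∈ Finset.range (g + 1), ∑ α : Fin N, ∑ β : Fin N,
      (-1 : R N) ^ (k + 1) * C (ηinv α β) *
        ttildeSum (fun p => Bracket N F g1 [(((k + 1 : ℕ) : ℤ), α), (0, x), ((p.1 : ℤ) - 1, p.2)]) *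
        Bracket N F (g - g1) ((((m + 1 - (k + 1) : ℕ) : ℤ), β) :: coordList N Vs) =
      ∑ g1 ∈ Finset.range (g + 1), ∑ α : Fin N, ∑ β : Fin N,
        (-1 : R N) ^ k * C (ηinv α β) * Bracket N F g1 [((k : ℤ), α), (0, x)] *
          Bracket N F (g - g1) ((((m - k : ℕ) : ℤ), β) :: coordList N Vs) := by
    intro k _
    refine Finset.sum_congr rfl fun g1 hg => Finset.sum_congr rfl fun α _ =>
      Finset.sum_congr rfl fun β _ => ?_
    rw [hB (k + 1) g1 hg α, if_neg (by simp), Nat.add_sub_add_right, Nat.cast_succ,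
      add_sub_cancel_right]
    ring
  rw [hzero, Finset.sum_congr rfl hsucc]
  ring

end GWBigPhase
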